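/- In the thermodynamic limit the quenched pressure of the Viana–Bray model satisfies A(α) = ln 2 + ψ(α,α) − α A′(α). Precisely: fix β > 0 and α > 0, and assume (i) the limit A(α′) = lim_{N→∞} A_N(α′) exists for all α′ in a neighborhood of α and A is differentiable at α; (ii) lim_{N→∞} N·(A_N(α(1+1/N)) − A_N(α)) = α A′(α); (iii) the limit ψ(α′,α) = lim_{N→∞} ψ_N(α′,α) exists for all α′ in a neighborhood of α and is continuous in α′ at α′ = α. Then A(α) = ln 2 + ψ(α,α) − α A′(α). -/

import Mathlib

noncomputable section

/-- The real value of a Boolean spin: `true ↦ 1`, `false ↦ -1`. -/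
def spin (b : Bool) : ℝ := if b then 1 else -1

/-- Minus `β` times the Viana–Bray Hamiltonian with `p` interaction terms:
`-β H = β ∑_{ν<p} J_ν σ_{i_ν} σ_{j_ν}`. -/
def negBetaH (N p : ℕ) (β : ℝ) (i j : Fin p → Fin N) (J : Fin p → Bool)
    (σ : Fin N → Bool) : ℝ :=
  β * ∑ ν : Fin p, spin (J ν) * spin (σ (i ν)) * spin (σ (j ν))

/-- The partition function `Z = ∑_σ exp (-β H(σ))`. -/
def partitionZ (N p : ℕ) (β : ℝ) (i j : Fin p → Fin N) (J : Fin p → Bool) : ℝ :=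
  ∑ σ : Fin N → Bool, Real.exp (negBetaH N p β i j J σ)

/-- Quenched expectation over the interaction randomness: the number `p` of interaction
terms is Poisson of mean `lam`, and the index families `i, j : Fin p → Fin N` and sign
family `J : Fin p → Bool` are i.i.d. uniform. -/
def quenchedAvg (N : ℕ) (lam : ℝ)
    (g : (p : ℕ) → (Fin p → Fin N) → (Fin p → Fin N) → (Fin p → Bool) → ℝ) : ℝ :=
  ∑' p : ℕ, (Real.exp (-lam) * lam ^ p / (Nat.factorial p : ℝ)) *
    ((∑ i : Fin p → Fin N, ∑ j : Fin p → Fin N, ∑ J : Fin p → Bool, g p i j J) /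
      ((N : ℝ) ^ p * (N : ℝ) ^ p * 2 ^ p))

/-- The quenched pressure `A_N(α) = (1/N) E ln Z` of the Viana–Bray model with Poisson
mean `α N`. -/
def pressure (N : ℕ) (β α : ℝ) : ℝ :=
  quenchedAvg N (α * N) fun p i j J => (1 / (N : ℝ)) * Real.log (partitionZ N p β i j J)

/-- Expectation over the cavity randomness: a Poisson (mean `lam`) number `q` of cavity
terms, with i.i.d. uniform indices `k : Fin q → Fin N` and signs `J' : Fin q → Bool`. -/
def cavityAvg (N : ℕ) (lam : ℝ)
    (g : (q : ℕ) → (Fin q → Fin N) → (Fin q → Bool) → ℝ) : ℝ :=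
  ∑' q : ℕ, (Real.exp (-lam) * lam ^ q / (Nat.factorial q : ℝ)) *
    ((∑ k : Fin q → Fin N, ∑ J' : Fin q → Bool, g q k J') / ((N : ℝ) ^ q * 2 ^ q))

/-- The cavity field `β ∑_{ν<q} J'_ν σ_{k_ν}`. -/
def cavityField (N q : ℕ) (β : ℝ) (k : Fin q → Fin N) (J' : Fin q → Bool)
    (σ : Fin N → Bool) : ℝ :=
  β * ∑ ν : Fin q, spin (J' ν) * spin (σ (k ν))

/-- The cavity function
`ψ_N(α', α) = E ln Ω exp (β ∑_{ν=1}^{P_{2α'}} J'_ν σ_{k_ν})`, where `Ω` is the Gibbs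
expectation of the Viana–Bray model at connectivity `α` and the cavity randomness (Poisson
of mean `2α'`) is independent of the quenched variables in `Ω`. -/
def cavityFun (N : ℕ) (β α' α : ℝ) : ℝ :=
  quenchedAvg N (α * N) fun p i j J =>
    cavityAvg N (2 * α') fun q k J' =>
      Real.log ((∑ σ : Fin N → Bool,
        Real.exp (negBetaH N p β i j J σ + cavityField N q β k J' σ)) /
          partitionZ N p β i j J)

/-!
Averaging over a Poisson number of i.i.d. uniform terms is exponentiation: on functions of linear
growth of the energy `h = -β H`, it acts as `exp (r • G)`, where `G` sums the differences produced
by translating `h` by one term. These operators commute, so the exponential of a sum factors.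

By the flip symmetry, one of `N + 1` spins may be frozen to `1`, which extracts the factor `2` from
the partition function. A bond of the larger system is then a bond of the remaining `N` spins, a
cavity term (in two ways, one for each end at the frozen spin), or a loop at the frozen spin, and
loops do not change the mean of `ln Z`. At connectivity `α (1 + 1 / N)` each type of bond has the
same rate `α / (2 N)` as in the system of `N` spins, so that exactly
`(N + 1) A_{N+1}(α (1 + 1 / N)) = N A_N(α) + ln 2 + ψ_N(α, α)`.
Since `A_N` is `|β|`-Lipschitz, `α (1 + 1 / N)` may be replaced by `α (1 + 1 / (N + 1))` at the cost
of an error `O(1 / N)`; hence the increments of `N A_N(α)` converge, and Cesàro's lemma applies.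
-/

section PoissonExponential

open NormedSpace

variable {𝔸 : Type*} [NormedRing 𝔸] [NormedAlgebra ℝ 𝔸]

lemma exp_smul_one (c : ℝ) : exp (c • (1 : 𝔸)) = Real.exp c • (1 : 𝔸) := by
  rw [← Algebra.algebraMap_eq_smul_one, ← algebraMap_exp_comm, ← Real.exp_eq_exp_ℝ,
    Algebra.algebraMap_eq_smul_one]

lemma hasSum_exp_smul_sub_one [CompleteSpace 𝔸] (c : ℝ) (x : 𝔸) :
    HasSum (fun n : ℕ => (Real.exp (-c) * c ^ n / n.factorial) • x ^ n) (exp (c • (x - 1))) := by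
  let _ : NormedAlgebra ℚ 𝔸 := .restrictScalars ℚ ℝ 𝔸
  have hexp : exp (c • (x - 1)) = Real.exp (-c) • exp (c • x) := by
    rw [smul_sub, sub_eq_add_neg, ← neg_smul,
      exp_add_of_commute ((Commute.one_right _).smul_right _), exp_smul_one, mul_smul_one]
  rw [hexp]
  convert! (exp_series_hasSum_exp' (𝕂 := ℝ) (c • x)).const_smul (Real.exp (-c)) using 2 with n
  rw [smul_pow, smul_smul, smul_smul]
  congr 1
  ring

lemma exp_apply_of_apply_eq_zero {E : Type*} [NormedAddCommGroup E] [NormedSpace ℝ E]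
    [CompleteSpace E] {A : E →L[ℝ] E} {f : E} (hA : A f = 0) : exp A f = f := by
  have hsum := (exp_series_hasSum_exp' (𝕂 := ℝ) A).mapL (ContinuousLinearMap.apply ℝ E f)
  have hzero (n : ℕ) (hn : n ≠ 0) :
      ContinuousLinearMap.apply ℝ E f ((n.factorial : ℝ)⁻¹ • A ^ n) = 0 := by
    obtain ⟨m, rfl⟩ := Nat.exists_eq_succ_of_ne_zero hn
    simp [pow_succ, hA]
  simpa using hsum.unique (hasSum_single 0 hzero)

end PoissonExponential

section RandomSum

open Multiplicative NormedSpace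

variable {M ι : Type*} [AddCommMonoid M] [Fintype ι]

/-- The expectation of `F (b t₁ + ⋯ + b tₙ)`, where `n` is Poisson of mean `lam` and the `t`'s are
i.i.d. uniform on `ι`. -/
def compoundPoissonAvg (lam : ℝ) (b : ι → M) (F : M → ℝ) : ℝ :=
  ∑' n : ℕ, (Real.exp (-lam) * lam ^ n / n.factorial) *
    ((∑ s : Fin n → ι, F (∑ ν, b (s ν))) / (Fintype.card ι : ℝ) ^ n)

lemma abs_compoundPoissonAvg_le {lam : ℝ} (hlam : 0 ≤ lam) (b : ι → M) {F : M → ℝ} {C : ℝ}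
    (hF : ∀ g, |F g| ≤ C) :
    |compoundPoissonAvg lam b F| ≤ C := by
  lift lam to NNReal using hlam
  have hC : 0 ≤ C := (abs_nonneg _).trans (hF 0)
  have hweights : HasSum (fun n : ℕ => Real.exp (-lam) * lam ^ n / n.factorial * C) C := by
    simpa using (ProbabilityTheory.hasSum_one_poissonMeasure lam).mul_right C
  rw [compoundPoissonAvg, ← Real.norm_eq_abs]
  refine tsum_of_norm_bounded hweights fun n => ?_
  have hsum : |∑ s : Fin n → ι, F (∑ ν, b (s ν))| ≤ C * (Fintype.card ι : ℝ) ^ n :=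
    (Finset.abs_sum_le_sum_abs _ _).trans <|
      (Finset.sum_le_card_nsmul _ _ C fun _ _ => hF _).trans_eq (by simp [mul_comm])
  rw [norm_mul, Real.norm_of_nonneg (by positivity), Real.norm_eq_abs, abs_div,
    abs_of_nonneg (by positivity : 0 ≤ (Fintype.card ι : ℝ) ^ n)]
  gcongr
  exact div_le_of_le_mul₀ (by positivity) hC hsum

lemma sum_map_ofAdd_pow {R : Type*} [Semiring R] (T : Multiplicative M →* R) (b : ι → M) (n : ℕ) :
    (∑ t, T (ofAdd (b t))) ^ n = ∑ s : Fin n → ι, T (ofAdd (∑ ν, b (s ν))) := by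
  induction n with
  | zero => simp
  | succ n ih =>
    rw [pow_succ', ih, ← (Fin.consEquiv fun _ => ι).sum_comp, Fintype.sum_prod_type,
      Finset.sum_mul_sum]
    simp [Fin.consEquiv, Fin.sum_univ_succ]

variable [Nonempty ι] {𝔸 : Type*} [NormedRing 𝔸] [NormedAlgebra ℝ 𝔸] [CompleteSpace 𝔸]

lemma hasSum_exp_smul_sum_map_sub_one (T : Multiplicative M →* 𝔸) (b : ι → M) (lam : ℝ) :
    HasSum (fun n : ℕ => (Real.exp (-lam) * lam ^ n / n.factorial) •
        ((Fintype.card ι : ℝ) ^ n)⁻¹ • ∑ s : Fin n → ι, T (ofAdd (∑ ν, b (s ν))))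
      (exp ((lam / Fintype.card ι) • ∑ t, (T (ofAdd (b t)) - 1))) := by
  have hgen : (lam / Fintype.card ι) • ∑ t, (T (ofAdd (b t)) - 1) =
      lam • ((Fintype.card ι : ℝ)⁻¹ • ∑ t, T (ofAdd (b t)) - 1) := by
    have hcard : (Fintype.card ι : ℝ) ≠ 0 := by simp
    simp [div_eq_mul_inv, mul_smul, smul_sub, ← Nat.cast_smul_eq_nsmul ℝ, hcard]
  simpa only [hgen, smul_pow, sum_map_ofAdd_pow, inv_pow] using
    hasSum_exp_smul_sub_one lam ((Fintype.card ι : ℝ)⁻¹ • ∑ t, T (ofAdd (b t)))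

end RandomSum

section TransitionSemigroup

open scoped BoundedContinuousFunction
open Multiplicative NormedSpace

variable {M : Type*} [SeminormedAddCommGroup M]

variable (M) in
/-- The Banach space of continuous functions on `M` growing at most linearly. The bounded function
`f` stands for `h ↦ (1 + ‖h‖) * f h`, whose values are read off by `LinearGrowth.eval`. -/
def LinearGrowth : Type _ := M →ᵇ ℝ

instance : NormedAddCommGroup (LinearGrowth M) := inferInstanceAs (NormedAddCommGroup (M →ᵇ ℝ))

instance : NormedSpace ℝ (LinearGrowth M) := inferInstanceAs (NormedSpace ℝ (M →ᵇ ℝ))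

instance : CompleteSpace (LinearGrowth M) := inferInstanceAs (CompleteSpace (M →ᵇ ℝ))

namespace LinearGrowth

/-- The value at `h` of the function of linear growth represented by a bounded function. -/
def eval (h : M) : LinearGrowth M →L[ℝ] ℝ :=
  (1 + ‖h‖) • BoundedContinuousFunction.evalCLM ℝ h

lemma one_add_norm_pos (h : M) : 0 < 1 + ‖h‖ := by positivity

lemma ext_eval {f g : LinearGrowth M} (hfg : ∀ h, eval h f = eval h g) : f = g :=
  BoundedContinuousFunction.ext fun h => mul_left_cancel₀ (one_add_norm_pos h).ne' (hfg h)

/-- A Lipschitz function as an element of the space of functions of linear growth. -/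
def ofLipschitz {K : NNReal} {F : M → ℝ} (hF : LipschitzWith K F) : LinearGrowth M :=
  BoundedContinuousFunction.ofNormedAddCommGroup (fun h => F h / (1 + ‖h‖))
    (hF.continuous.div (by fun_prop) fun h => (one_add_norm_pos h).ne') (|F 0| + K) fun h => by
      have hdist : |F h - F 0| ≤ K * ‖h‖ := by simpa [Real.dist_eq] using hF.dist_le_mul h 0
      have htri : |F h| ≤ |F h - F 0| + |F 0| := by simpa using abs_add_le (F h - F 0) (F 0)
      rw [Real.norm_eq_abs, abs_div, abs_of_pos (one_add_norm_pos h),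
        div_le_iff₀ (one_add_norm_pos h)]
      nlinarith [norm_nonneg h, abs_nonneg (F 0), K.coe_nonneg]

@[simp]
lemma eval_ofLipschitz {K : NNReal} {F : M → ℝ} (hF : LipschitzWith K F) (h : M) :
    eval h (ofLipschitz hF) = F h :=
  mul_div_cancel₀ _ (one_add_norm_pos h).ne'

/-- The ratio of the weights `1 + ‖h + g‖` and `1 + ‖h‖`. -/
def weightRatio (g : M) : M →ᵇ ℝ :=
  .ofNormedAddCommGroup (fun h => (1 + ‖h + g‖) / (1 + ‖h‖))
    (by fun_prop (disch := exact fun h => (one_add_norm_pos h).ne')) (1 + ‖g‖) fun h => by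
      rw [Real.norm_eq_abs, abs_of_nonneg (by positivity), div_le_iff₀ (one_add_norm_pos h)]
      nlinarith [norm_add_le h g, mul_nonneg (norm_nonneg g) (norm_nonneg h)]

/-- The translation of a function of linear growth by `g`. -/
def translate (g : M) : LinearGrowth M →L[ℝ] LinearGrowth M :=
  ContinuousLinearMap.mul ℝ (M →ᵇ ℝ) (weightRatio g) ∘L
    BoundedContinuousFunction.compContinuousCLM ℝ ℝ (.addRight g)

@[simp]
lemma eval_translate (g h : M) (f : LinearGrowth M) : eval h (translate g f) = eval (h + g) f := by
  let f' : M →ᵇ ℝ := f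
  change (1 + ‖h‖) * ((1 + ‖h + g‖) / (1 + ‖h‖) * f' (h + g)) = (1 + ‖h + g‖) * f' (h + g)
  rw [← mul_assoc, mul_div_cancel₀ _ (one_add_norm_pos h).ne']

/-- The action of `M` by translations on functions of linear growth. -/
def translation : Multiplicative M →* (LinearGrowth M →L[ℝ] LinearGrowth M) where
  toFun g := translate g.toAdd
  map_one' := by ext1 f; exact ext_eval fun h => by simp
  map_mul' g g' := by ext1 f; exact ext_eval fun h => by simp [add_assoc]

@[simp]
lemma eval_translation (g : Multiplicative M) (h : M) (f : LinearGrowth M) :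
    eval h (translation g f) = eval (h + g.toAdd) f :=
  eval_translate g.toAdd h f

variable {ι : Type*} [Fintype ι]

/-- The generator of the continuous-time random walk on `M` that jumps by each `b t` at
unit rate. -/
def generator (b : ι → M) : LinearGrowth M →L[ℝ] LinearGrowth M :=
  ∑ t, (translation (ofAdd (b t)) - 1)

/-- The time-`r` transition operator of the continuous-time random walk on `M` that jumps by each
`b t` at unit rate. -/
def transition (b : ι → M) (r : ℝ) : LinearGrowth M →L[ℝ] LinearGrowth M :=
  exp (r • generator b)

lemma commute_smul_generator {κ : Type*} [Fintype κ] (b : ι → M) (c : κ → M) (r s : ℝ) :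
    Commute (r • generator b) (s • generator c) := by
  refine Commute.smul_left (Commute.smul_right ?_ s) r
  refine Commute.sum_left _ _ _ fun t _ => Commute.sum_right _ _ _ fun u _ => ?_
  have htranslation := (Commute.all (ofAdd (b t)) (ofAdd (c u))).map translation
  exact (htranslation.sub_left (.one_left _)).sub_right
    ((Commute.one_right _).sub_left (.one_left _))

lemma eval_generator (b : ι → M) (h : M) (f : LinearGrowth M) :
    eval h (generator b f) = ∑ t, (eval (h + b t) f - eval h f) := by
  simp [generator]

lemma abs_eval_generator_ofLipschitz_le {K : NNReal} {F : M → ℝ} (hF : LipschitzWith K F)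
    {b : ι → M} {B : ℝ} (hb : ∀ t, ‖b t‖ ≤ B) (h : M) :
    |eval h (generator b (ofLipschitz hF))| ≤ Fintype.card ι * (K * B) := by
  simp only [eval_generator, eval_ofLipschitz]
  refine (Finset.abs_sum_le_sum_abs _ _).trans ?_
  refine (Finset.sum_le_card_nsmul _ _ (K * B) fun t _ => ?_).trans_eq (nsmul_eq_mul _ _)
  calc |F (h + b t) - F h| ≤ K * ‖b t‖ := by
        simpa [Real.dist_eq] using hF.dist_le_mul (h + b t) h
    _ ≤ K * B := by gcongr; exact hb t

variable [Nonempty ι]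

lemma compoundPoissonAvg_eval (lam : ℝ) (b : ι → M) (h : M) (f : LinearGrowth M) :
    compoundPoissonAvg lam b (fun g => eval (h + g) f) =
      eval h (transition b (lam / Fintype.card ι) f) := by
  have hsum := (hasSum_exp_smul_sum_map_sub_one translation b lam).mapL
    (eval h ∘L ContinuousLinearMap.apply ℝ (LinearGrowth M) f)
  refine Eq.trans (tsum_congr fun n => ?_) hsum.tsum_eq
  simp [div_eq_inv_mul]

lemma compoundPoissonAvg_const_add_eval (lam : ℝ) (b : ι → M) (c : ℝ) (h : M)
    (f : LinearGrowth M) :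
    compoundPoissonAvg lam b (fun g => c + eval (h + g) f) =
      c + eval h (transition b (lam / Fintype.card ι) f) := by
  let const : LinearGrowth M := ofLipschitz (LipschitzWith.const' (K := 0) c)
  have hconst : transition b (lam / Fintype.card ι) const = const :=
    exp_apply_of_apply_eq_zero (ext_eval fun g => by simp [eval_generator, const])
  simpa [hconst, const] using compoundPoissonAvg_eval lam b h (const + f)

lemma abs_eval_transition_le {r : ℝ} (hr : 0 ≤ r) (b : ι → M) {f : LinearGrowth M} {C : ℝ}
    (hf : ∀ h, |eval h f| ≤ C) (h : M) : |eval h (transition b r f)| ≤ C := by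
  have havg := abs_compoundPoissonAvg_le (lam := r * Fintype.card ι) (by positivity) b
    fun g => hf (h + g)
  rwa [compoundPoissonAvg_eval, mul_div_cancel_right₀ _ (by simp)] at havg

lemma abs_eval_transition_sub_le {b : ι → M} {f : LinearGrowth M} {C : ℝ}
    (hf : ∀ h, |eval h (generator b f)| ≤ C) {r s : ℝ} (hr : 0 ≤ r) (hs : 0 ≤ s) (h : M) :
    |eval h (transition b s f) - eval h (transition b r f)| ≤ C * |s - r| := by
  have hderiv (u : ℝ) : HasDerivAt (fun u : ℝ => eval h (transition b u f))
      (eval h (transition b u (generator b f))) u :=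
    ((eval h ∘L ContinuousLinearMap.apply ℝ (LinearGrowth M) f).hasFDerivAt.comp_hasDerivAt u
      (hasDerivAt_exp_smul_const (generator b) u) :)
  exact (convex_Ici 0).norm_image_sub_le_of_norm_hasDerivWithin_le
    (fun u _ => (hderiv u).hasDerivWithinAt)
    (fun u hu => abs_eval_transition_le hu b hf h) hr hs

end LinearGrowth

end TransitionSemigroup

section LogSumExp

variable {S : Type*} [Fintype S]

/-- The logarithm of the partition function of a system with finite configuration space `S` and
Boltzmann factor `exp (h s)`. -/
def logSumExp (h : S → ℝ) : ℝ := Real.log (∑ s, Real.exp (h s))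

variable [Nonempty S]

lemma sum_exp_pos (h : S → ℝ) : 0 < ∑ s, Real.exp (h s) :=
  Finset.sum_pos (fun _ _ => Real.exp_pos _) Finset.univ_nonempty

lemma logSumExp_add_const (h : S → ℝ) (c : ℝ) :
    logSumExp (h + fun _ => c) = logSumExp h + c := by
  simp only [logSumExp, Pi.add_apply, Real.exp_add, ← Finset.sum_mul]
  rw [Real.log_mul (sum_exp_pos h).ne' (Real.exp_ne_zero c), Real.log_exp]

lemma logSumExp_mono {g h : S → ℝ} (hgh : g ≤ h) : logSumExp g ≤ logSumExp h :=
  Real.log_le_log (sum_exp_pos g) (Finset.sum_le_sum fun s _ => Real.exp_le_exp.2 (hgh s))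

lemma lipschitzWith_logSumExp : LipschitzWith 1 (logSumExp : (S → ℝ) → ℝ) := by
  refine LipschitzWith.of_le_add fun g h => ?_
  rw [← logSumExp_add_const]
  refine logSumExp_mono fun s => sub_le_iff_le_add'.1 ?_
  exact (le_abs_self _).trans ((Real.dist_eq _ _).symm.trans_le (dist_le_pi_dist g h s))

lemma logSumExp_eq_log_two_add_of_flip_invariant {N : ℕ} {G : (Fin (N + 1) → Bool) → ℝ}
    (hG : ∀ σ, G (fun x => !σ x) = G σ) :
    logSumExp G = Real.log 2 + logSumExp fun τ : Fin N → Bool => G (Fin.cons true τ) := by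
  have hflip : ∑ τ : Fin N → Bool, Real.exp (G (Fin.cons false τ)) =
      ∑ τ : Fin N → Bool, Real.exp (G (Fin.cons true τ)) := by
    refine Fintype.sum_equiv (Equiv.arrowCongr (Equiv.refl _) Equiv.boolNot) _ _ fun τ => ?_
    rw [← hG]
    congr 2
    funext x
    refine Fin.cases ?_ (fun y => ?_) x <;> simp
  have hsum : ∑ σ, Real.exp (G σ) = 2 * ∑ τ : Fin N → Bool, Real.exp (G (Fin.cons true τ)) := by
    rw [← (Fin.consEquiv fun _ : Fin (N + 1) => Bool).sum_comp, Fintype.sum_prod_type,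
      Fintype.sum_bool]
    exact (congrArg _ hflip).trans (two_mul _).symm
  rw [logSumExp, logSumExp, hsum, Real.log_mul two_ne_zero (sum_exp_pos _).ne']

end LogSumExp

section Model

open LinearGrowth NormedSpace

lemma abs_spin (b : Bool) : |spin b| = 1 := by cases b <;> simp [spin]

lemma spin_not (b : Bool) : spin (!b) = -spin b := by cases b <;> simp [spin]

lemma negBetaH_not (N p : ℕ) (β : ℝ) (i j : Fin p → Fin N) (J : Fin p → Bool)
    (σ : Fin N → Bool) : negBetaH N p β i j J (fun x => !σ x) = negBetaH N p β i j J σ := by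
  simp [negBetaH, spin_not]

/-- The contribution of one interaction term, with indices and sign `t`, to `-β H`. -/
def bond (N : ℕ) (β : ℝ) (t : Fin N × Fin N × Bool) : (Fin N → Bool) → ℝ :=
  fun σ => β * (spin t.2.2 * spin (σ t.1) * spin (σ t.2.1))

/-- The contribution of one cavity term, with index and sign `t`, to the cavity field. -/
def cavityBond (N : ℕ) (β : ℝ) (t : Fin N × Bool) : (Fin N → Bool) → ℝ :=
  fun σ => β * (spin t.2 * spin (σ t.1))

/-- A bond of the system of `N + 1` spins whose first spin is frozen to `1`. -/
def frozenBond (N : ℕ) (β : ℝ) (t : Fin (N + 1) × Fin (N + 1) × Bool) : (Fin N → Bool) → ℝ :=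
  fun σ => bond (N + 1) β t (Fin.cons true σ)

/-- A bond that joins the frozen spin to itself. -/
def loopBond (N : ℕ) (β : ℝ) (J : Bool) : (Fin N → Bool) → ℝ := fun _ => β * spin J

lemma sum_bond (N p : ℕ) (β : ℝ) (i j : Fin p → Fin N) (J : Fin p → Bool) :
    ∑ ν, bond N β (i ν, j ν, J ν) = negBetaH N p β i j J := by
  funext σ
  simp [bond, negBetaH, Finset.mul_sum, Finset.sum_apply]

lemma sum_cavityBond (N q : ℕ) (β : ℝ) (k : Fin q → Fin N) (J : Fin q → Bool) :
    ∑ ν, cavityBond N β (k ν, J ν) = cavityField N q β k J := by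
  funext σ
  simp [cavityBond, cavityField, Finset.mul_sum, Finset.sum_apply]

lemma norm_bond_le (N : ℕ) (β : ℝ) (t : Fin N × Fin N × Bool) : ‖bond N β t‖ ≤ |β| :=
  (pi_norm_le_iff_of_nonneg (abs_nonneg β)).2 fun σ => by simp [bond, abs_spin]

lemma logSumExp_negBetaH_succ (N p : ℕ) (β : ℝ) (i j : Fin p → Fin (N + 1)) (J : Fin p → Bool) :
    logSumExp (negBetaH (N + 1) p β i j J) =
      Real.log 2 + logSumExp (∑ ν, frozenBond N β (i ν, j ν, J ν)) := by
  rw [logSumExp_eq_log_two_add_of_flip_invariant (negBetaH_not (N + 1) p β i j J), ← sum_bond]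
  congr 2
  funext τ
  simp [frozenBond, Finset.sum_apply]

lemma generator_frozenBond (N : ℕ) (β : ℝ) :
    generator (frozenBond N β) =
      generator (bond N β) + (2 : ℝ) • generator (cavityBond N β) + generator (loopBond N β) := by
  have hloop (J : Bool) : frozenBond N β (0, 0, J) = loopBond N β J := by
    funext σ; simp [frozenBond, bond, loopBond, spin]
  have hleft (k : Fin N) (J : Bool) : frozenBond N β (0, k.succ, J) = cavityBond N β (k, J) := by
    funext σ; simp [frozenBond, bond, cavityBond, spin]
  have hright (k : Fin N) (J : Bool) : frozenBond N β (k.succ, 0, J) = cavityBond N β (k, J) := by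
    funext σ; simp [frozenBond, bond, cavityBond, spin]
  have hbulk (k l : Fin N) (J : Bool) :
      frozenBond N β (k.succ, l.succ, J) = bond N β (k, l, J) := by
    funext σ; simp [frozenBond, bond]
  simp only [generator, Fintype.sum_prod_type, Fin.sum_univ_succ, hloop, hleft, hright, hbulk,
    Finset.sum_add_distrib, two_smul]
  abel

/-- The logarithm of the partition function of `N` spins, as a function of `-β H`. -/
def logPartition (N : ℕ) : LinearGrowth ((Fin N → Bool) → ℝ) :=
  ofLipschitz lipschitzWith_logSumExp

lemma eval_logPartition (N : ℕ) (h : (Fin N → Bool) → ℝ) :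
    eval h (logPartition N) = logSumExp h :=
  eval_ofLipschitz lipschitzWith_logSumExp h

lemma transition_loopBond_logPartition (N : ℕ) (β r : ℝ) :
    transition (loopBond N β) r (logPartition N) = logPartition N := by
  refine exp_apply_of_apply_eq_zero (ext_eval fun h => ?_)
  have hadd (J : Bool) : logSumExp (h + loopBond N β J) = logSumExp h + β * spin J :=
    logSumExp_add_const h _
  have hzero : eval h (generator (loopBond N β) (logPartition N)) = 0 := by
    simp [eval_generator, eval_logPartition, hadd, spin]
  rw [smul_apply, map_smul, hzero, smul_zero, map_zero]

lemma transition_frozenBond_logPartition (N : ℕ) (β r : ℝ) :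
    transition (frozenBond N β) r (logPartition N) =
      transition (bond N β) r (transition (cavityBond N β) (2 * r) (logPartition N)) := by
  let _ : NormedAlgebra ℚ (LinearGrowth ((Fin N → Bool) → ℝ) →L[ℝ]
      LinearGrowth ((Fin N → Bool) → ℝ)) := .restrictScalars ℚ ℝ _
  have hsplit : r • generator (frozenBond N β) = r • generator (bond N β) +
      (2 * r) • generator (cavityBond N β) + r • generator (loopBond N β) := by
    rw [generator_frozenBond]
    module
  rw [transition, hsplit, exp_add_of_commute
      ((commute_smul_generator _ _ _ _).add_left (commute_smul_generator _ _ _ _)),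
    exp_add_of_commute (commute_smul_generator _ _ _ _)]
  exact congrArg _ (congrArg _ (transition_loopBond_logPartition N β r))

section Averages

variable {M : Type*} [AddCommMonoid M]

lemma quenchedAvg_eq_compoundPoissonAvg (N : ℕ) (lam : ℝ) (b : Fin N × Fin N × Bool → M)
    (F : M → ℝ) :
    quenchedAvg N lam (fun _ i j J => F (∑ ν, b (i ν, j ν, J ν))) =
      compoundPoissonAvg lam b F := by
  refine tsum_congr fun p => ?_
  have hsum : ∑ s : Fin p → Fin N × Fin N × Bool, F (∑ ν, b (s ν)) =
      ∑ i : Fin p → Fin N, ∑ j : Fin p → Fin N, ∑ J : Fin p → Bool,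
        F (∑ ν, b (i ν, j ν, J ν)) := by
    simp_rw [← Fintype.sum_prod_type']
    exact Fintype.sum_equiv ((Equiv.arrowProdEquivProdArrow _ _ _).trans
      (Equiv.prodCongr (Equiv.refl _) (Equiv.arrowProdEquivProdArrow _ _ _))) _ _ fun _ => rfl
  simp [hsum, mul_pow, mul_assoc]

lemma cavityAvg_eq_compoundPoissonAvg (N : ℕ) (lam : ℝ) (c : Fin N × Bool → M) (F : M → ℝ) :
    cavityAvg N lam (fun _ k J => F (∑ ν, c (k ν, J ν))) = compoundPoissonAvg lam c F := by
  refine tsum_congr fun q => ?_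
  have hsum : ∑ s : Fin q → Fin N × Bool, F (∑ ν, c (s ν)) =
      ∑ k : Fin q → Fin N, ∑ J : Fin q → Bool, F (∑ ν, c (k ν, J ν)) := by
    simp_rw [← Fintype.sum_prod_type']
    exact Fintype.sum_equiv (Equiv.arrowProdEquivProdArrow _ _ _) _ _ fun _ => rfl
  simp [hsum, mul_pow]

end Averages

lemma natCast_mul_pressure_eq_quenchedAvg (N : ℕ) [NeZero N] (β a : ℝ) :
    N * pressure N β a =
      quenchedAvg N (a * N) fun p i j J => logSumExp (negBetaH N p β i j J) := by
  have hN : (N : ℝ) ≠ 0 := NeZero.ne _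
  rw [pressure, quenchedAvg, quenchedAvg, ← tsum_mul_left]
  refine tsum_congr fun p => ?_
  simp only [← Finset.mul_sum, logSumExp, partitionZ]
  field_simp

lemma mul_div_card_bonds (N : ℕ) [NeZero N] (a : ℝ) :
    a * N / Fintype.card (Fin N × Fin N × Bool) = a / (2 * N) := by
  have hN : (N : ℝ) ≠ 0 := NeZero.ne _
  simp only [Fintype.card_prod, Fintype.card_fin, Fintype.card_bool, Nat.cast_mul, Nat.cast_ofNat]
  field_simp

lemma natCast_mul_pressure (N : ℕ) [NeZero N] (β a : ℝ) :
    N * pressure N β a = eval 0 (transition (bond N β) (a / (2 * N)) (logPartition N)) := by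
  rw [natCast_mul_pressure_eq_quenchedAvg, ← mul_div_card_bonds, ← compoundPoissonAvg_eval]
  simp_rw [← sum_bond, zero_add, eval_logPartition]
  exact quenchedAvg_eq_compoundPoissonAvg ..

lemma succ_mul_pressure_succ (N : ℕ) (β a : ℝ) :
    (N + 1) * pressure (N + 1) β a = Real.log 2 +
      eval 0 (transition (frozenBond N β) (a / (2 * (N + 1))) (logPartition N)) := by
  rw [← Nat.cast_add_one, natCast_mul_pressure_eq_quenchedAvg, ← mul_div_card_bonds,
    ← compoundPoissonAvg_const_add_eval]
  simp_rw [logSumExp_negBetaH_succ, zero_add, eval_logPartition]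
  exact quenchedAvg_eq_compoundPoissonAvg (N + 1) _ (frozenBond N β) (Real.log 2 + logSumExp ·)

lemma cavityAvg_log_div (N : ℕ) [NeZero N] (β a : ℝ) (h : (Fin N → Bool) → ℝ) :
    (cavityAvg N (2 * a) fun q k J =>
      Real.log ((∑ σ, Real.exp (h σ + cavityField N q β k J σ)) / ∑ σ, Real.exp (h σ))) =
      eval h (transition (cavityBond N β) (a / N) (logPartition N) - logPartition N) := by
  have htime : 2 * a / Fintype.card (Fin N × Bool) = a / N := by
    simp only [Fintype.card_prod, Fintype.card_fin, Fintype.card_bool, Nat.cast_mul,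
      Nat.cast_ofNat]
    field_simp
  have hlog (g : (Fin N → Bool) → ℝ) :
      Real.log ((∑ σ, Real.exp (h σ + g σ)) / ∑ σ, Real.exp (h σ)) =
        -logSumExp h + eval (h + g) (logPartition N) := by
    rw [eval_logPartition, ← sub_eq_neg_add]
    exact Real.log_div (sum_exp_pos (h + g)).ne' (sum_exp_pos h).ne'
  rw [map_sub, eval_logPartition, sub_eq_neg_add, ← htime, ← compoundPoissonAvg_const_add_eval]
  simp_rw [hlog, ← sum_cavityBond]
  exact cavityAvg_eq_compoundPoissonAvg N _ (cavityBond N β)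
    (fun g => -logSumExp h + eval (h + g) (logPartition N))

lemma cavityFun_eq_eval (N : ℕ) [NeZero N] (β α' α : ℝ) :
    cavityFun N β α' α = eval 0 (transition (bond N β) (α / (2 * N))
      (transition (cavityBond N β) (α' / N) (logPartition N) - logPartition N)) := by
  rw [← mul_div_card_bonds, ← compoundPoissonAvg_eval, ← quenchedAvg_eq_compoundPoissonAvg]
  simp_rw [sum_bond, zero_add, ← cavityAvg_log_div]
  rfl

lemma succ_mul_pressure_succ_eq (N : ℕ) [NeZero N] (β α : ℝ) :
    (N + 1) * pressure (N + 1) β (α * (1 + 1 / N)) =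
      N * pressure N β α + Real.log 2 + cavityFun N β α α := by
  have hN : (N : ℝ) ≠ 0 := NeZero.ne _
  have hfrozen : α * (1 + 1 / N) / (2 * (N + 1)) = α / (2 * N) := by field_simp
  have hcavity : 2 * (α / (2 * N)) = α / N := by field_simp
  rw [succ_mul_pressure_succ, natCast_mul_pressure, cavityFun_eq_eval, hfrozen,
    transition_frozenBond_logPartition, hcavity, map_sub, map_sub]
  ring

lemma abs_pressure_sub_le (N : ℕ) [NeZero N] (β : ℝ) {a a' : ℝ} (ha : 0 ≤ a) (ha' : 0 ≤ a') :
    |pressure N β a' - pressure N β a| ≤ |β| * |a' - a| := by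
  have hN : (0 : ℝ) < N := Nat.cast_pos.2 (NeZero.pos N)
  have hgen := abs_eval_generator_ofLipschitz_le lipschitzWith_logSumExp (norm_bond_le N β)
  have hsub := abs_eval_transition_sub_le hgen (r := a / (2 * N)) (s := a' / (2 * N))
    (by positivity) (by positivity) 0
  rw [← logPartition, ← natCast_mul_pressure, ← natCast_mul_pressure, ← mul_sub, abs_mul,
    abs_of_pos hN, ← sub_div, abs_div, abs_of_pos (by positivity : (0 : ℝ) < 2 * N)] at hsub
  refine le_of_mul_le_mul_left (hsub.trans_eq ?_) hN
  simp only [Fintype.card_prod, Fintype.card_fin, Fintype.card_bool, Nat.cast_mul,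
    Nat.cast_ofNat, NNReal.coe_one, one_mul]
  field_simp

end Model

section ThermodynamicLimit

open Filter Topology

lemma tendsto_of_tendsto_succ_mul_sub {x : ℕ → ℝ} {l : ℝ}
    (hx : Tendsto (fun n : ℕ => (n + 1) * x (n + 1) - n * x n) atTop (𝓝 l)) :
    Tendsto x atTop (𝓝 l) := by
  refine hx.cesaro.congr' ?_
  filter_upwards [eventually_ne_atTop 0] with n hn
  have htelescope := Finset.sum_range_sub (fun n : ℕ => n * x n) n
  push_cast at htelescope
  rw [htelescope]
  field_simp
  ring

lemma tendsto_succ_mul_pressure_sub (β : ℝ) {α : ℝ} (hα : 0 ≤ α) :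
    Tendsto (fun N : ℕ => ((N : ℝ) + 1) * (pressure (N + 1) β (α * (1 + 1 / N)) -
      pressure (N + 1) β (α * (1 + 1 / (N + 1))))) atTop (𝓝 0) := by
  refine squeeze_zero_norm' ?_ (tendsto_const_div_atTop_nhds_zero_nat (|β| * α))
  filter_upwards [eventually_gt_atTop 0] with N hN
  have hgap : α * (1 + 1 / N) - α * (1 + 1 / (N + 1)) = α / (N * (N + 1)) := by
    field_simp; ring
  have hlip := abs_pressure_sub_le (N + 1) β (a := α * (1 + 1 / (N + 1))) (a' := α * (1 + 1 / N))
    (by positivity) (by positivity)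
  rw [hgap, abs_of_nonneg (by positivity : 0 ≤ α / (N * (N + 1)))] at hlip
  calc ‖_‖ = ((N : ℝ) + 1) * |pressure (N + 1) β (α * (1 + 1 / N)) -
        pressure (N + 1) β (α * (1 + 1 / (N + 1)))| := by
        rw [norm_mul, Real.norm_of_nonneg (by positivity), Real.norm_eq_abs]
    _ ≤ (N + 1) * (|β| * (α / (N * (N + 1)))) := by gcongr
    _ = |β| * α / N := by field_simp

theorem pressure_cavity_representation_general (β : ℝ) {α : ℝ} (hα : 0 ≤ α) {ψ d : ℝ}
    (hderiv : Tendsto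
      (fun N : ℕ => (N : ℝ) * (pressure N β (α * (1 + 1 / N)) - pressure N β α)) atTop (𝓝 d))
    (hψ : Tendsto (fun N : ℕ => cavityFun N β α α) atTop (𝓝 ψ)) :
    Tendsto (fun N : ℕ => pressure N β α) atTop (𝓝 (Real.log 2 + ψ - d)) := by
  refine tendsto_of_tendsto_succ_mul_sub ?_
  have hlim := ((hψ.const_add (Real.log 2)).sub (hderiv.comp (tendsto_add_atTop_nat 1))).sub
    (tendsto_succ_mul_pressure_sub β hα)
  rw [sub_zero] at hlim
  refine hlim.congr' ?_
  filter_upwards [eventually_ne_atTop 0] with N hN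
  have : NeZero N := ⟨hN⟩
  have hcavity := succ_mul_pressure_succ_eq N β α
  simp only [Function.comp_apply, Nat.cast_add, Nat.cast_one]
  linear_combination -hcavity

end ThermodynamicLimit

/-- In the thermodynamic limit the quenched pressure of the Viana–Bray model
satisfies `A(α) = ln 2 + ψ(α,α) - α A'(α)`.  Precisely: fix `β > 0` and `α > 0` and
assume (i) `A(α') = lim_N A_N(α')` exists for all `α'` near `α` and `A` has derivative
`A'` at `α`; (ii) `N (A_N(α(1+1/N)) - A_N(α)) → α A'`; (iii) `ψ(α', α) = lim_N ψ_N(α', α)`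
exists for `α'` near `α` and is continuous in `α'` at `α`.  Then
`A α = ln 2 + ψ(α, α) - α A'`. -/
theorem pressure_cavity_representation (β α : ℝ) (hβ : 0 < β) (hα : 0 < α)
    (A : ℝ → ℝ) (A' : ℝ) (ψ : ℝ → ℝ)
    (hAlim : ∀ᶠ α' in nhds α,
      Filter.Tendsto (fun N : ℕ => pressure N β α') Filter.atTop (nhds (A α')))
    (hAdiff : HasDerivAt A A' α)
    (hAderivlim : Filter.Tendsto
      (fun N : ℕ => (N : ℝ) * (pressure N β (α * (1 + 1 / N)) - pressure N β α))
      Filter.atTop (nhds (α * A')))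
    (hψlim : ∀ᶠ α' in nhds α,
      Filter.Tendsto (fun N : ℕ => cavityFun N β α' α) Filter.atTop (nhds (ψ α')))
    (hψcont : ContinuousAt ψ α) :
    A α = Real.log 2 + ψ α - α * A' := by
  exact tendsto_nhds_unique hAlim.self_of_nhds
    (pressure_cavity_representation_general β hα.le hAderivlim hψlim.self_of_nhds)

end
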